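/- For every (x,y,z) ∈ ℂ³ with y ≠ 3 and P(x,y,z) = 0, letting A₁ = [[1,1,0],[0,1,1],[0,0,1]] and A₂ as in the explicit formula (rows [0, (3x+3y+z-21)/(y-3)², -(63+x²-15x-27y+3xy+3y²)/(y-3)³], [0, -(x-3)/(y-3), (30-6x-6y+xy-z)/(y-3)²], [y-3, 0, 3+(x-3)/(y-3)]), the matrices A₁, A₂, and (A₂A₁)⁻¹ all have trace 3 and their squares have trace 3; moreover tr(A₁A₂⁻¹) = x, tr(A₁⁻¹A₂) = y, and tr(A₁A₂A₁⁻¹A₂⁻¹) = z. -/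

import Mathlib

open Matrix

noncomputable def LawtonP (x y z : ℂ) : ℂ :=
  414 - 108 * x + x ^ 3 - 108 * y + 21 * x * y + y ^ 3
    - (51 - 9 * x - 9 * y + x * y) * z + z ^ 2

/-!
A `3 × 3` matrix is unipotent when its characteristic polynomial is `(X - 1) ^ 3`, that is, when
its trace and the trace of its adjugate are `3` and its determinant is `1`. Inversion exchanges the
two traces of a matrix of determinant `1`, so it preserves this property, and
`tr M² = (tr M)² - 2 tr (adj M)` gives the trace of the square.

Put `w = y - 3`, `c = -(x - 3) / w` and `a = (3 * x + 3 * y + z - 21) / w ^ 2`. In these parameters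
the unipotency of the second generator and of the product amounts to two equations, one of which
determines the corner entry, while the other one, multiplied by `w ^ 3`, is `P(x, y, z) = 0`.
-/

section CommRing

variable {R : Type*} [CommRing R]

theorem inv_eq_adjugate_of_det_eq_one {n : Type*} [Fintype n] [DecidableEq n]
    {M : Matrix n n R} (hM : M.det = 1) : M⁻¹ = M.adjugate := by
  rw [inv_def, hM, Ring.inverse_one, one_smul]

theorem trace_mul_self_fin_three (M : Matrix (Fin 3) (Fin 3) R) :
    (M * M).trace = M.trace ^ 2 - 2 * M.adjugate.trace := by
  simp only [trace_fin_three, mul_apply, Fin.sum_univ_three, adjugate_fin_three, of_apply,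
    cons_val]
  ring

/-- Unipotency of a `3 × 3` matrix, as the condition that its characteristic polynomial
`X ^ 3 - tr M * X ^ 2 + tr (adj M) * X - det M` is `(X - 1) ^ 3`, coefficient by coefficient. -/
structure HasUnipotentCharpoly (M : Matrix (Fin 3) (Fin 3) R) : Prop where
  trace_eq : M.trace = 3
  trace_adjugate_eq : M.adjugate.trace = 3
  det_eq : M.det = 1

namespace HasUnipotentCharpoly

variable {M : Matrix (Fin 3) (Fin 3) R}

theorem trace_mul_self (hM : HasUnipotentCharpoly M) : (M * M).trace = 3 := by
  rw [trace_mul_self_fin_three, hM.trace_eq, hM.trace_adjugate_eq]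
  norm_num

theorem inv (hM : HasUnipotentCharpoly M) : HasUnipotentCharpoly M⁻¹ := by
  rw [inv_eq_adjugate_of_det_eq_one hM.det_eq]
  have adjugate_adjugate_eq : M.adjugate.adjugate = M := by
    rw [adjugate_adjugate M (by decide), hM.det_eq, one_pow, one_smul]
  exact
    { trace_eq := hM.trace_adjugate_eq
      trace_adjugate_eq := by rw [adjugate_adjugate_eq, hM.trace_eq]
      det_eq := by rw [det_adjugate, hM.det_eq, one_pow] }

end HasUnipotentCharpoly

/-- The first generator: the regular unipotent Jordan block of size `3`. -/
def firstGenerator (R : Type*) [CommRing R] : Matrix (Fin 3) (Fin 3) R :=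
  !![1, 1, 0; 0, 1, 1; 0, 0, 1]

theorem hasUnipotentCharpoly_firstGenerator : HasUnipotentCharpoly (firstGenerator R) where
  trace_eq := by
    rw [firstGenerator, trace_fin_three_of]
    norm_num
  trace_adjugate_eq := by
    rw [firstGenerator, adjugate_fin_three_of, trace_fin_three_of]
    norm_num
  det_eq := by simp [firstGenerator, det_fin_three]

theorem inv_firstGenerator : (firstGenerator R)⁻¹ = !![1, -1, 1; 0, 1, -1; 0, 0, 1] := by
  rw [inv_eq_adjugate_of_det_eq_one hasUnipotentCharpoly_firstGenerator.det_eq]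
  simp [firstGenerator, adjugate_fin_three_of]

/-- The normal form of the second generator, in coordinates that make its entries polynomial. The
last diagonal entry makes the trace `3`, and the entry `-c - a` makes the adjugates of this matrix
and of its product with `firstGenerator` have equal traces. -/
def secondGenerator (a b c w : R) : Matrix (Fin 3) (Fin 3) R :=
  !![0, a, b; 0, c, -c - a; w, 0, 3 - c]

variable {a b c w : R}

theorem hasUnipotentCharpoly_secondGenerator (hb : b * w = 3 * c - c ^ 2 - 3)
    (ha : w * a * (a + c) = (c - 1) ^ 3) : HasUnipotentCharpoly (secondGenerator a b c w) where
  trace_eq := by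
    rw [secondGenerator, trace_fin_three_of]
    ring
  trace_adjugate_eq := by
    rw [secondGenerator, adjugate_fin_three_of, trace_fin_three_of]
    linear_combination -hb
  det_eq := by
    simp only [secondGenerator, det_fin_three, of_apply, cons_val]
    linear_combination -c * hb - ha

theorem secondGenerator_mul_firstGenerator (a b c w : R) :
    secondGenerator a b c w * firstGenerator R = !![0, a, a + b; 0, c, -a; w, w, 3 - c] := by
  simp [secondGenerator, firstGenerator, ← add_sub_assoc]

theorem hasUnipotentCharpoly_secondGenerator_mul_firstGenerator
    (hb : b * w = 3 * c - c ^ 2 - 3) (ha : w * a * (a + c) = (c - 1) ^ 3) :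
    HasUnipotentCharpoly (secondGenerator a b c w * firstGenerator R) where
  trace_eq := by
    rw [secondGenerator_mul_firstGenerator, trace_fin_three_of]
    ring
  trace_adjugate_eq := by
    rw [secondGenerator_mul_firstGenerator, adjugate_fin_three_of, trace_fin_three_of]
    linear_combination -hb
  det_eq := by
    rw [det_mul, (hasUnipotentCharpoly_secondGenerator hb ha).det_eq,
      hasUnipotentCharpoly_firstGenerator.det_eq, one_mul]

theorem trace_firstGenerator_mul_inv_secondGenerator (hb : b * w = 3 * c - c ^ 2 - 3)
    (ha : w * a * (a + c) = (c - 1) ^ 3) :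
    (firstGenerator R * (secondGenerator a b c w)⁻¹).trace = 3 - c * w := by
  rw [inv_eq_adjugate_of_det_eq_one (hasUnipotentCharpoly_secondGenerator hb ha).det_eq,
    firstGenerator, secondGenerator, adjugate_fin_three_of, mul_fin_three, trace_fin_three_of]
  linear_combination -hb

theorem trace_inv_firstGenerator_mul_secondGenerator (a b c w : R) :
    ((firstGenerator R)⁻¹ * secondGenerator a b c w).trace = w + 3 := by
  rw [inv_firstGenerator, secondGenerator, mul_fin_three, trace_fin_three_of]
  ring

theorem trace_commutator_generators (hb : b * w = 3 * c - c ^ 2 - 3)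
    (ha : w * a * (a + c) = (c - 1) ^ 3) :
    (firstGenerator R * secondGenerator a b c w * (firstGenerator R)⁻¹ *
      (secondGenerator a b c w)⁻¹).trace = a * w ^ 2 + 3 * c * w - 3 * w + 3 := by
  rw [inv_eq_adjugate_of_det_eq_one (hasUnipotentCharpoly_secondGenerator hb ha).det_eq,
    inv_firstGenerator, firstGenerator, secondGenerator, adjugate_fin_three_of,
    mul_fin_three, mul_fin_three, mul_fin_three, trace_fin_three_of]
  linear_combination (w - 3 * c) * hb - 3 * ha

/-- Lawton's polynomial `P`, with coefficients in an arbitrary commutative ring. -/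
def lawtonPolynomial (x y z : R) : R :=
  414 - 108 * x + x ^ 3 - 108 * y + 21 * x * y + y ^ 3
    - (51 - 9 * x - 9 * y + x * y) * z + z ^ 2

theorem lawtonPolynomial_traces (a c w : R) :
    lawtonPolynomial (3 - c * w) (w + 3) (a * w ^ 2 + 3 * c * w - 3 * w + 3) =
      w ^ 3 * (w * a * (a + c) - (c - 1) ^ 3) := by
  rw [lawtonPolynomial]
  ring

end CommRing

theorem stmt_8_general {K : Type*} [Field K] {x y z : K} (hy : y ≠ 3)
    (hP : lawtonPolynomial x y z = 0) :
    let A₁ : Matrix (Fin 3) (Fin 3) K := !![1, 1, 0; 0, 1, 1; 0, 0, 1]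
    let A₂ : Matrix (Fin 3) (Fin 3) K :=
      !![0, (3 * x + 3 * y + z - 21) / (y - 3) ^ 2,
           -(63 + x ^ 2 - 15 * x - 27 * y + 3 * x * y + 3 * y ^ 2) / (y - 3) ^ 3;
         0, -(x - 3) / (y - 3), (30 - 6 * x - 6 * y + x * y - z) / (y - 3) ^ 2;
         y - 3, 0, 3 + (x - 3) / (y - 3)]
    A₁.trace = 3 ∧ (A₁ * A₁).trace = 3 ∧
    A₂.trace = 3 ∧ (A₂ * A₂).trace = 3 ∧
    ((A₂ * A₁)⁻¹).trace = 3 ∧ ((A₂ * A₁)⁻¹ * (A₂ * A₁)⁻¹).trace = 3 ∧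
    (A₁ * A₂⁻¹).trace = x ∧
    (A₁⁻¹ * A₂).trace = y ∧
    (A₁ * A₂ * A₁⁻¹ * A₂⁻¹).trace = z := by
  intro A₁ A₂
  have hw : y - 3 ≠ 0 := sub_ne_zero.mpr hy
  let a := (3 * x + 3 * y + z - 21) / (y - 3) ^ 2
  let b := -(63 + x ^ 2 - 15 * x - 27 * y + 3 * x * y + 3 * y ^ 2) / (y - 3) ^ 3
  let c := -(x - 3) / (y - 3)
  have hA₂ : A₂ = secondGenerator a b c (y - 3) := by
    have entry_one_two : -c - a = (30 - 6 * x - 6 * y + x * y - z) / (y - 3) ^ 2 := by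
      simp only [a, c]; field
    have entry_two_two : 3 - c = 3 + (x - 3) / (y - 3) := by simp only [c]; field
    rw [secondGenerator, entry_one_two, entry_two_two]
  have hx : 3 - c * (y - 3) = x := by simp only [c]; field
  have hz : a * (y - 3) ^ 2 + 3 * c * (y - 3) - 3 * (y - 3) + 3 = z := by simp only [a, c]; field
  have hb : b * (y - 3) = 3 * c - c ^ 2 - 3 := by simp only [b, c]; field
  have ha : (y - 3) * a * (a + c) = (c - 1) ^ 3 := by
    have hP' := lawtonPolynomial_traces a c (y - 3)
    rw [hx, sub_add_cancel, hz, hP, eq_comm, mul_eq_zero] at hP'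
    exact sub_eq_zero.mp (hP'.resolve_left (pow_ne_zero 3 hw))
  have h₁ : HasUnipotentCharpoly A₁ := hasUnipotentCharpoly_firstGenerator
  have h₂ := hasUnipotentCharpoly_secondGenerator hb ha
  have h₂₁ := (hasUnipotentCharpoly_secondGenerator_mul_firstGenerator hb ha).inv
  rw [hA₂]
  exact ⟨h₁.trace_eq, h₁.trace_mul_self, h₂.trace_eq, h₂.trace_mul_self,
    h₂₁.trace_eq, h₂₁.trace_mul_self,
    (trace_firstGenerator_mul_inv_secondGenerator hb ha).trans hx,
    (trace_inv_firstGenerator_mul_secondGenerator a b c (y - 3)).trans (sub_add_cancel y 3),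
    (trace_commutator_generators hb ha).trans hz⟩

theorem stmt_8 (x y z : ℂ) (hy : y ≠ 3) (hP : LawtonP x y z = 0) :
    let A₁ : Matrix (Fin 3) (Fin 3) ℂ := !![1,1,0; 0,1,1; 0,0,1]
    let A₂ : Matrix (Fin 3) (Fin 3) ℂ :=
      !![0, (3*x + 3*y + z - 21) / (y - 3) ^ 2,
           -(63 + x ^ 2 - 15*x - 27*y + 3*x*y + 3*y ^ 2) / (y - 3) ^ 3;
         0, -(x - 3) / (y - 3), (30 - 6*x - 6*y + x*y - z) / (y - 3) ^ 2;
         y - 3, 0, 3 + (x - 3) / (y - 3)]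
    A₁.trace = 3 ∧ (A₁ * A₁).trace = 3 ∧
    A₂.trace = 3 ∧ (A₂ * A₂).trace = 3 ∧
    ((A₂ * A₁)⁻¹).trace = 3 ∧ ((A₂ * A₁)⁻¹ * (A₂ * A₁)⁻¹).trace = 3 ∧
    (A₁ * A₂⁻¹).trace = x ∧
    (A₁⁻¹ * A₂).trace = y ∧
    (A₁ * A₂ * A₁⁻¹ * A₂⁻¹).trace = z :=
  stmt_8_general hy hP
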